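/- Let S be a set of n points in the plane in general position. Then cr(S) = f_S(S,S) − n(n−1)(n−2)(n−3)/8, where f_S(S,S) = Σ_{p∈S} Σ_{q∈S} C(λ_S(p,q), 2). -/

import Mathlib

open Finset

/-- The plane. -/
abbrev Plane : Type := ℝ × ℝ

/-- The determinant det(q - p, r - p). -/
def det2 (p q r : Plane) : ℝ :=
  (q.1 - p.1) * (r.2 - p.2) - (q.2 - p.2) * (r.1 - p.1)

/-- `r` is strictly to the left of the directed line from `p` to `q`. -/
def LeftOf (p q r : Plane) : Prop := 0 < det2 p q r

/-- `r` is strictly to the right of the directed line from `p` to `q`. -/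
def RightOf (p q r : Plane) : Prop := det2 p q r < 0

/-- A finite point set is in general position if no three of its points are collinear. -/
def GenPos (S : Finset Plane) : Prop :=
  ∀ p ∈ S, ∀ q ∈ S, ∀ r ∈ S, p ≠ q → p ≠ r → q ≠ r →
    ¬ Collinear ℝ ({p, q, r} : Set Plane)

open Classical in
/-- `lam S p q` is the number of points of `S` strictly to the left of the directed
line from `p` to `q`, with `lam S p p = 0`. -/
noncomputable def lam (S : Finset Plane) (p q : Plane) : ℕ :=
  if p = q then 0 else (S.filter fun r => LeftOf p q r).card

/-- A finite point set is in convex position if no one of its points lies in the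
convex hull of the others. -/
def ConvexPos (P : Finset Plane) : Prop :=
  ∀ x ∈ P, x ∉ convexHull ℝ ((P.erase x : Finset Plane) : Set Plane)

open Classical in
/-- The number of 4-element subsets of `S` in convex position. -/
noncomputable def squareCount (S : Finset Plane) : ℕ :=
  ((S.powersetCard 4).filter fun P => ConvexPos P).card

/-- `fS S P Q = ∑_{p ∈ P} ∑_{q ∈ Q} C(lam S p q, 2)`. -/
noncomputable def fS (S P Q : Finset Plane) : ℕ :=
  ∑ p ∈ P, ∑ q ∈ Q, Nat.choose (lam S p q) 2

/-!
Both `fS S S S` and `cr(S)` are sums over the four-point subsets `P` of `S`: as `fS S S S` counts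
the directed segments together with two points to their left, it is the sum of `fS P P P`. In
general position `P` is either a convex quadrilateral or a triangle with an inner point, and
`fS P P P` is the number of segments of `P` that do not separate the other two points: the four
sides of the quadrilateral, or the three sides of the triangle. Hence `fS P P P` is `3`, plus `1`
if `P` is in convex position, and summing over `P` gives `fS S S S = 3 * C(n, 4) + cr(S)`.
-/

section Orientation

variable {p q r : Plane}

lemma det2_rotate (p q r : Plane) : det2 q r p = det2 p q r := by
  simp only [det2]; ring

lemma det2_swap (p q r : Plane) : det2 q p r = -det2 p q r := by
  simp only [det2]; ring

lemma det2_add_det2_add_det2 (a b c x : Plane) :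
    det2 a b x + det2 b c x + det2 c a x = det2 a b c := by
  simp only [det2]; ring

lemma det2_smul_add_smul (p q x y : Plane) {s t : ℝ} (hst : s + t = 1) :
    det2 p q (s • x + t • y) = s * det2 p q x + t * det2 p q y := by
  obtain rfl : t = 1 - s := by linarith
  simp only [det2, Prod.fst_add, Prod.snd_add, Prod.smul_fst, Prod.smul_snd, smul_eq_mul]
  ring

lemma det2_smul_add_smul_add_smul (a b c x : Plane) :
    det2 b c x • a + det2 c a x • b + det2 a b x • c = det2 a b c • x := by
  ext <;> simp only [det2, Prod.fst_add, Prod.snd_add, Prod.smul_fst, Prod.smul_snd,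
    smul_eq_mul] <;> ring

lemma collinear_of_det2_eq_zero (h : det2 p q r = 0) : Collinear ℝ ({p, q, r} : Set Plane) := by
  rcases eq_or_ne p q with rfl | hpq
  · simpa using collinear_pair ℝ p r
  -- `r` is its own orthogonal projection to the line `pq`, which has parameter `t`.
  let t := ((q.1 - p.1) * (r.1 - p.1) + (q.2 - p.2) * (r.2 - p.2)) /
    ((q.1 - p.1) ^ 2 + (q.2 - p.2) ^ 2)
  have hden : (q.1 - p.1) ^ 2 + (q.2 - p.2) ^ 2 ≠ 0 := by
    contrapose! hpq
    ext <;> nlinarith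
  have hr : AffineMap.lineMap p q t = r := by
    simp only [det2] at h
    ext <;> simp only [AffineMap.lineMap_apply, vsub_eq_sub, vadd_eq_add, Prod.fst_add,
      Prod.snd_add, Prod.smul_fst, Prod.smul_snd, Prod.fst_sub, Prod.snd_sub, smul_eq_mul, t] <;>
      field_simp
    · linear_combination (q.2 - p.2) * h
    · linear_combination -(q.1 - p.1) * h
  have hmem : r ∈ line[ℝ, p, q] := hr ▸ AffineMap.lineMap_mem_affineSpan_pair t p q
  have hperm : ({p, q, r} : Set Plane) = {r, p, q} := by
    grind
  rw [hperm]
  exact collinear_insert_of_mem_affineSpan_pair hmem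

namespace LeftOf

lemma rotate (h : LeftOf p q r) : LeftOf q r p := by
  rwa [LeftOf, det2_rotate]

lemma not_swap (h : LeftOf p q r) : ¬ LeftOf q p r := by
  rw [LeftOf, det2_swap, not_lt, Left.neg_nonpos_iff]
  exact h.le

lemma ne (h : LeftOf p q r) : p ≠ q := by
  rintro rfl
  exact h.not_swap h

end LeftOf

lemma not_leftOf_left (p q : Plane) : ¬ LeftOf p q p :=
  fun h ↦ h.rotate.rotate.ne rfl

lemma not_leftOf_right (p q : Plane) : ¬ LeftOf p q q :=
  fun h ↦ h.rotate.ne rfl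

end Orientation

namespace GenPos

variable {S T : Finset Plane} {p q r : Plane}

lemma mono (hT : GenPos T) (hST : S ⊆ T) : GenPos S :=
  fun p hp q hq r hr ↦ hT p (hST hp) q (hST hq) r (hST hr)

lemma leftOf_or_leftOf_swap (hS : GenPos S) (hp : p ∈ S) (hq : q ∈ S) (hr : r ∈ S)
    (hpq : p ≠ q) (hpr : p ≠ r) (hqr : q ≠ r) : LeftOf p q r ∨ LeftOf q p r := by
  have hdet : det2 p q r ≠ 0 :=
    fun h ↦ hS p hp q hq r hr hpq hpr hqr (collinear_of_det2_eq_zero h)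
  rw [LeftOf, LeftOf, det2_swap p q, Left.neg_pos_iff]
  exact hdet.symm.lt_or_gt

end GenPos

section ConvexHull

variable {a b c x : Plane}

lemma convex_setOf_det2_nonneg (p q : Plane) : Convex ℝ {x | 0 ≤ det2 p q x} := by
  intro x hx y hy s t hs ht hst
  rw [Set.mem_ofPred_eq, det2_smul_add_smul p q x y hst]
  exact add_nonneg (mul_nonneg hs hx) (mul_nonneg ht hy)

lemma mem_convexHull_of_det2_nonneg (habc : LeftOf a b c) (hab : 0 ≤ det2 a b x)
    (hbc : 0 ≤ det2 b c x) (hca : 0 ≤ det2 c a x) : x ∈ convexHull ℝ {a, b, c} := by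
  let w : Fin 3 → ℝ := ![det2 b c x, det2 c a x, det2 a b x]
  have hw : ∑ i, w i = det2 a b c := by
    rw [Fin.sum_univ_three, ← det2_add_det2_add_det2 a b c x]
    simp only [w, Matrix.cons_val]
    ring
  refine mem_convexHull_of_exists_fintype (fun i ↦ (det2 a b c)⁻¹ * w i) ![a, b, c] ?_ ?_ ?_ ?_
  · intro i
    refine mul_nonneg (inv_nonneg.2 habc.le) ?_
    fin_cases i
    exacts [hbc, hca, hab]
  · rw [← mul_sum, hw, inv_mul_cancel₀ habc.ne']
  · intro i
    fin_cases i <;> simp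
  · simp only [mul_smul, ← smul_sum]
    rw [inv_smul_eq_iff₀ habc.ne', ← det2_smul_add_smul_add_smul, Fin.sum_univ_three]
    rfl

lemma notMem_convexHull_of_leftOf {d : Plane} (hdab : LeftOf d a b) (hbcd : 0 ≤ det2 b c d) :
    a ∉ convexHull ℝ {b, c, d} := by
  intro ha
  have hsub : {b, c, d} ⊆ {x | 0 ≤ det2 d b x} := by
    rintro x (rfl | rfl | rfl)
    · simp [det2, mul_comm]
    · rwa [Set.mem_ofPred_eq, ← det2_rotate]
    · simp [det2]
  have hdba : 0 ≤ det2 d b a := convexHull_min hsub (convex_setOf_det2_nonneg d b) ha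
  rw [det2_swap, Left.nonneg_neg_iff] at hdba
  exact hdba.not_gt hdab.rotate.rotate

end ConvexHull

section FourPoints

variable {P : Finset Plane} {a b c d : Plane}

/-- The points `a`, `b`, `c`, `d`, in this order, are the vertices of a counterclockwise convex
quadrilateral. -/
def IsCCWQuad (a b c d : Plane) : Prop :=
  LeftOf a b c ∧ LeftOf b c d ∧ LeftOf c d a ∧ LeftOf d a b

/-- The point `d` lies in the interior of the counterclockwise triangle `abc`. The orientation of
the triangle is not part of the definition, as it follows from the three conditions. -/
def InCCWTriangle (a b c d : Plane) : Prop :=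
  LeftOf a b d ∧ LeftOf b c d ∧ LeftOf c a d

lemma InCCWTriangle.leftOf (h : InCCWTriangle a b c d) : LeftOf a b c := by
  obtain ⟨hab, hbc, hca⟩ := h
  rw [LeftOf, ← det2_add_det2_add_det2 a b c d]
  exact add_pos (add_pos hab hbc) hca

lemma InCCWTriangle.not_convexPos (h : InCCWTriangle a b c d) : ¬ ConvexPos {a, b, c, d} := by
  have habc := h.leftOf
  obtain ⟨hab, hbc, hca⟩ := h
  have herase : ({a, b, c, d} : Finset Plane).erase d = {a, b, c} := by
    have := hab.rotate.ne
    have := hbc.rotate.ne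
    have := hca.rotate.ne
    grind
  intro hconv
  refine hconv d (by simp) ?_
  rw [herase]
  simpa using mem_convexHull_of_det2_nonneg habc hab.le hbc.le hca.le

lemma IsCCWQuad.rotate (h : IsCCWQuad a b c d) : IsCCWQuad b c d a := by
  obtain ⟨habc, hbcd, hcda, hdab⟩ := h
  exact ⟨hbcd, hcda, hdab, habc⟩

lemma IsCCWQuad.notMem_convexHull_erase (h : IsCCWQuad a b c d) :
    a ∉ convexHull ℝ ((({a, b, c, d} : Finset Plane).erase a : Finset Plane) : Set Plane) := by
  obtain ⟨habc, hbcd, -, hdab⟩ := h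
  have herase : ({a, b, c, d} : Finset Plane).erase a = {b, c, d} := by
    have := habc.ne
    have := habc.rotate.rotate.ne
    have := hdab.ne
    grind
  rw [herase]
  simpa using notMem_convexHull_of_leftOf hdab hbcd.le

lemma insert_rotate_four {α : Type*} [DecidableEq α] (a b c d : α) :
    ({b, c, d, a} : Finset α) = {a, b, c, d} := by
  grind

lemma IsCCWQuad.convexPos (h : IsCCWQuad a b c d) : ConvexPos {a, b, c, d} := by
  have ha := h.notMem_convexHull_erase
  have hb := h.rotate.notMem_convexHull_erase
  have hc := h.rotate.rotate.notMem_convexHull_erase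
  have hd := h.rotate.rotate.rotate.notMem_convexHull_erase
  rw [insert_rotate_four] at hb
  rw [insert_rotate_four, insert_rotate_four] at hc
  rw [insert_rotate_four, insert_rotate_four, insert_rotate_four] at hd
  simpa only [ConvexPos, mem_insert, mem_singleton, forall_eq_or_imp, forall_eq] using
    ⟨ha, hb, hc, hd⟩

/-- The lines through the sides of `abc` cut the plane into seven regions. If `d` lies beyond a
side, then the four points form a convex quadrilateral; if it lies beyond a vertex, then that
vertex is the inner point. -/
lemma exists_isCCWQuad_or_inCCWTriangle (habc : LeftOf a b c) (hab : LeftOf a b d ∨ LeftOf b a d)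
    (hbc : LeftOf b c d ∨ LeftOf c b d) (hca : LeftOf c a d ∨ LeftOf a c d) :
    ∃ w x y z, ({w, x, y, z} : Finset Plane) = {a, b, c, d} ∧
      (IsCCWQuad w x y z ∨ InCCWTriangle w x y z) := by
  rcases hab with hab | hab <;> rcases hbc with hbc | hbc <;> rcases hca with hca | hca
  · exact ⟨a, b, c, d, rfl, .inr ⟨hab, hbc, hca⟩⟩
  · exact ⟨a, b, c, d, rfl, .inl ⟨habc, hbc, hca.rotate, hab.rotate.rotate⟩⟩
  · exact ⟨c, a, b, d, by grind, .inl ⟨habc.rotate.rotate, hab, hbc.rotate, hca.rotate.rotate⟩⟩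
  · exact ⟨a, b, d, c, by grind, .inr ⟨habc, hbc.rotate, hca.rotate.rotate⟩⟩
  · exact ⟨b, c, a, d, by grind, .inl ⟨habc.rotate, hca, hab.rotate, hbc.rotate.rotate⟩⟩
  · exact ⟨b, c, d, a, by grind, .inr ⟨habc.rotate, hca.rotate, hab.rotate.rotate⟩⟩
  · exact ⟨c, a, d, b, by grind, .inr ⟨habc.rotate.rotate, hab.rotate, hbc.rotate.rotate⟩⟩
  · have hsum := det2_add_det2_add_det2 a b c d
    rw [LeftOf, det2_swap] at hab hbc hca
    rw [LeftOf] at habc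
    linarith

lemma GenPos.exists_isCCWQuad_or_inCCWTriangle (hP : GenPos P) (hcard : #P = 4) :
    ∃ a b c d, {a, b, c, d} = P ∧ (IsCCWQuad a b c d ∨ InCCWTriangle a b c d) := by
  obtain ⟨a, b, c, d, hab, hac, had, hbc, hbd, hcd, rfl⟩ := card_eq_four.1 hcard
  have habd := hP.leftOf_or_leftOf_swap (p := a) (q := b) (r := d) (by simp) (by simp) (by simp)
    hab had hbd
  have hbcd := hP.leftOf_or_leftOf_swap (p := b) (q := c) (r := d) (by simp) (by simp) (by simp)
    hbc hbd hcd
  have hcad := hP.leftOf_or_leftOf_swap (p := c) (q := a) (r := d) (by simp) (by simp) (by simp)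
    hac.symm hcd had
  rcases hP.leftOf_or_leftOf_swap (p := a) (q := b) (r := c) (by simp) (by simp) (by simp)
    hab hac hbc with habc | hbac
  · exact exists_isCCWQuad_or_inCCWTriangle habc habd hbcd hcad
  · rw [insert_comm]
    exact exists_isCCWQuad_or_inCCWTriangle hbac habd.symm hcad.symm hbcd.symm

end FourPoints

section EdgeCount

open Classical in
lemma lam_eq_card_filter (S : Finset Plane) (p q : Plane) :
    lam S p q = #{r ∈ S | LeftOf p q r} := by
  rw [lam, ite_eq_right_iff]
  rintro rfl
  rw [eq_comm, card_eq_zero, filter_eq_empty_iff]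
  exact fun r _ h ↦ h.ne rfl

variable {P : Finset Plane} {p q r s : Plane}

/-- The contribution of the segment `pq`, taken in both directions, to `fS P P P`. -/
noncomputable def edgeCount (P : Finset Plane) (p q : Plane) : ℕ :=
  (lam P p q).choose 2 + (lam P q p).choose 2

lemma fS_self_eq_sum_edgeCount (hpq : p ≠ q) (hpr : p ≠ r) (hps : p ≠ s) (hqr : q ≠ r)
    (hqs : q ≠ s) (hrs : r ≠ s) (hP : P = {p, q, r, s}) :
    fS P P P = edgeCount P p q + edgeCount P q r + edgeCount P r s + edgeCount P s p +
      edgeCount P r p + edgeCount P q s := by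
  have hsum (g : Plane → ℕ) : ∑ x ∈ P, g x = g p + (g q + (g r + g s)) := by
    rw [hP, sum_insert (by simp [*]), sum_insert (by simp [*]), sum_pair hrs]
  have hself (x : Plane) : (lam P x x).choose 2 = 0 := by
    simp [lam]
  simp only [fS, hsum, hself, edgeCount]
  ring

lemma edgeCount_eq_one (hr : LeftOf p q r) (hs : LeftOf p q s) (hrs : r ≠ s)
    (hP : P = {p, q, r, s}) : edgeCount P p q = 1 := by
  simp [edgeCount, lam_eq_card_filter, hP, filter_insert, filter_singleton, not_leftOf_left,
    not_leftOf_right, hr, hs, hr.not_swap, hs.not_swap, hrs]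

lemma edgeCount_eq_zero (hr : LeftOf p q r) (hs : LeftOf q p s) (hP : P = {p, q, r, s}) :
    edgeCount P p q = 0 := by
  simp [edgeCount, lam_eq_card_filter, hP, filter_insert, filter_singleton, not_leftOf_left,
    not_leftOf_right, hr, hs, hr.not_swap, hs.not_swap]

lemma IsCCWQuad.fS_self (h : IsCCWQuad p q r s) (hP : P = {p, q, r, s}) : fS P P P = 4 := by
  obtain ⟨hpqr, hqrs, hrsp, hspq⟩ := h
  have hpr := hpqr.rotate.rotate.ne.symm
  have hqs := hqrs.rotate.rotate.ne.symm
  rw [fS_self_eq_sum_edgeCount hpqr.ne hpr hspq.ne.symm hqrs.ne hqs hrsp.ne hP,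
    edgeCount_eq_one hpqr hspq.rotate hrsp.ne hP,
    edgeCount_eq_one hqrs hpqr.rotate hspq.ne (by grind),
    edgeCount_eq_one hrsp hqrs.rotate hpqr.ne (by grind),
    edgeCount_eq_one hspq hrsp.rotate hqrs.ne (by grind),
    edgeCount_eq_zero hpqr.rotate.rotate hrsp.rotate.rotate (by grind),
    edgeCount_eq_zero hspq.rotate.rotate hqrs.rotate.rotate (by grind)]

lemma InCCWTriangle.fS_self (h : InCCWTriangle p q r s) (hP : P = {p, q, r, s}) :
    fS P P P = 3 := by
  have hpqr := h.leftOf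
  obtain ⟨hpqs, hqrs, hrps⟩ := h
  have hps := hpqs.rotate.rotate.ne.symm
  have hqs := hpqs.rotate.ne
  have hrs := hqrs.rotate.ne
  rw [fS_self_eq_sum_edgeCount hpqr.ne hrps.ne.symm hps hqrs.ne hqs hrs hP,
    edgeCount_eq_one hpqr hpqs hrs hP,
    edgeCount_eq_one hqrs hpqr.rotate hps.symm (by grind),
    edgeCount_eq_zero hqrs.rotate hrps.rotate.rotate (by grind),
    edgeCount_eq_zero hpqs.rotate.rotate hrps.rotate (by grind),
    edgeCount_eq_one hpqr.rotate.rotate hrps hqs (by grind),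
    edgeCount_eq_zero hpqs.rotate hqrs.rotate.rotate (by grind)]

open Classical in
lemma GenPos.fS_self_of_card_eq_four (hP : GenPos P) (hcard : #P = 4) :
    fS P P P = 3 + if ConvexPos P then 1 else 0 := by
  obtain ⟨p, q, r, s, rfl, h | h⟩ := hP.exists_isCCWQuad_or_inCCWTriangle hcard
  · rw [if_pos h.convexPos, h.fS_self rfl]
  · rw [if_neg h.not_convexPos, h.fS_self rfl]

end EdgeCount

section DoubleCounting

variable {S P : Finset Plane} {t : Σ _ : Plane × Plane, Finset Plane}

open Classical in
/-- The pairs of a directed segment spanned by `S` and a two-point subset of `S` to its left. These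
are the configurations counted by `fS S S S`. The condition that the endpoints are distinct
is omitted, as no point is to the left of a degenerate segment. -/
noncomputable def leftPairs (S : Finset Plane) : Finset (Σ _ : Plane × Plane, Finset Plane) :=
  (S ×ˢ S).sigma fun e ↦ powersetCard 2 {r ∈ S | LeftOf e.1 e.2 r}

/-- The set of all points occurring in a configuration of `leftPairs`. -/
noncomputable def leftPairSupport (t : Σ _ : Plane × Plane, Finset Plane) : Finset Plane :=
  insert t.1.1 (insert t.1.2 t.2)

lemma mem_leftPairs : t ∈ leftPairs S ↔
    leftPairSupport t ⊆ S ∧ (∀ r ∈ t.2, LeftOf t.1.1 t.1.2 r) ∧ #t.2 = 2 := by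
  simp only [leftPairs, leftPairSupport, mem_sigma, mem_product, mem_powersetCard, subset_iff,
    mem_filter, mem_insert]
  grind

lemma card_leftPairs (S : Finset Plane) : #(leftPairs S) = fS S S S := by
  simp only [leftPairs, fS, card_sigma, card_powersetCard, sum_product, lam_eq_card_filter]

lemma card_leftPairSupport (ht : t ∈ leftPairs S) : #(leftPairSupport t) = 4 := by
  obtain ⟨-, hleft, hcard⟩ := mem_leftPairs.1 ht
  have hp : t.1.1 ∉ t.2 := fun h ↦ not_leftOf_left _ _ (hleft _ h)
  have hq : t.1.2 ∉ t.2 := fun h ↦ not_leftOf_right _ _ (hleft _ h)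
  obtain ⟨r, hr⟩ : t.2.Nonempty := card_pos.1 (by omega)
  have hpq : t.1.1 ≠ t.1.2 := (hleft r hr).ne
  rw [leftPairSupport, card_insert_of_notMem (by simp [hpq, hp]), card_insert_of_notMem hq, hcard]

lemma filter_leftPairSupport_eq_leftPairs (hP : P ∈ S.powersetCard 4) :
    {t ∈ leftPairs S | leftPairSupport t = P} = leftPairs P := by
  obtain ⟨hPS, hcard⟩ := mem_powersetCard.1 hP
  ext t
  rw [mem_filter]
  constructor
  · rintro ⟨ht, rfl⟩
    exact mem_leftPairs.2 ⟨Subset.rfl, (mem_leftPairs.1 ht).2⟩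
  · intro ht
    obtain ⟨hsub, hleft⟩ := mem_leftPairs.1 ht
    refine ⟨mem_leftPairs.2 ⟨hsub.trans hPS, hleft⟩, eq_of_subset_of_card_le hsub ?_⟩
    rw [hcard, card_leftPairSupport ht]

lemma fS_self_eq_sum_powersetCard_four (S : Finset Plane) :
    fS S S S = ∑ P ∈ S.powersetCard 4, fS P P P := by
  have hmaps : ∀ t ∈ leftPairs S, leftPairSupport t ∈ S.powersetCard 4 :=
    fun t ht ↦ mem_powersetCard.2 ⟨(mem_leftPairs.1 ht).1, card_leftPairSupport ht⟩
  rw [← card_leftPairs, card_eq_sum_card_fiberwise hmaps]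
  refine sum_congr rfl fun P hP ↦ ?_
  rw [filter_leftPairSupport_eq_leftPairs hP, card_leftPairs]

end DoubleCounting

open Classical in
lemma GenPos.fS_self_eq {S : Finset Plane} (hS : GenPos S) :
    fS S S S = 3 * (#S).choose 4 + squareCount S := by
  calc fS S S S
    _ = ∑ P ∈ S.powersetCard 4, fS P P P := fS_self_eq_sum_powersetCard_four S
    _ = ∑ P ∈ S.powersetCard 4, (3 + if ConvexPos P then 1 else 0) := by
      refine sum_congr rfl fun P hP ↦ ?_
      obtain ⟨hPS, hcard⟩ := mem_powersetCard.1 hP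
      exact (hS.mono hPS).fS_self_of_card_eq_four hcard
    _ = 3 * (#S).choose 4 + squareCount S := by
      rw [sum_add_distrib, sum_const, card_powersetCard, smul_eq_mul, mul_comm, squareCount,
        card_filter]

lemma cast_mul_sub_one_mul_sub_two_mul_sub_three (R : Type*) [CommRing R] (n : ℕ) :
    (n : R) * (n - 1) * (n - 2) * (n - 3) = 24 * n.choose 4 := by
  have h := descPochhammer_eval_eq_descFactorial R n 4
  rw [Nat.descFactorial_eq_factorial_mul_choose] at h
  simpa [descPochhammer_succ_right, Nat.factorial] using h

theorem stmt7 (n : ℕ) (S : Finset Plane) (hcard : S.card = n) (hgp : GenPos S) :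
    (squareCount S : ℤ) =
      (fS S S S : ℤ) - (n : ℤ) * ((n : ℤ) - 1) * ((n : ℤ) - 2) * ((n : ℤ) - 3) / 8 := by
  have hfS : (fS S S S : ℤ) = 3 * n.choose 4 + squareCount S := by
    exact_mod_cast hcard ▸ hgp.fS_self_eq
  have hdiv : (n : ℤ) * (n - 1) * (n - 2) * (n - 3) / 8 = 3 * n.choose 4 := by
    rw [cast_mul_sub_one_mul_sub_two_mul_sub_three]
    omega
  rw [hfS, hdiv]
  ring
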